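/- Let c, x, y, σ ∈ ℂ with Re c > 0, Re x > 0, Re y > 0, and |Re σ| < (Re c)/2 (so that all confluent hypergeometric functions below are in the domain of their Laplace-transform representation; note that Re x > 0 and Re y > 0 automatically imply Magnus' convergence conditions Re((1−i)√x + (1+i)√y) > 0 and Re((1+i)√x + (1−i)√y) > 0). Then Γ(c) U(c, 2c, x+y) = (1/(2πi)) ∫_{σ−i∞}^{σ+i∞} Γ(c/2 − s) Γ(c/2 + s) U(c/2 − s, c, x) U(c/2 + s, c, y) ds. Equivalently, in purely integral form: ∫₀^∞ e^{−(x+y)t} t^{c−1} (1+t)^{c−1} dt = (1/(2π)) ∫_ℝ (∫₀^∞ e^{−xt} t^{c/2−σ−iτ−1} (1+t)^{c/2+σ+iτ−1} dt) (∫₀^∞ e^{−yt} t^{c/2+σ+iτ−1} (1+t)^{c/2−σ−iτ−1} dt) dτ. -/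

import Mathlib

/-- Confluent hypergeometric function of the second kind via its Laplace-transform
representation, valid for `Re a > 0`, `Re z > 0` (principal branch powers). -/
noncomputable def hypU (a b z : ℂ) : ℂ :=
  (Complex.Gamma a)⁻¹ *
    ∫ t in Set.Ioi (0 : ℝ), Complex.exp (-z * t) * (t : ℂ) ^ (a - 1) * ((1 : ℂ) + t) ^ (b - a - 1)

open MeasureTheory Set Filter Topology

/-- The Laplace kernel. -/
noncomputable def mkK (y α β : ℂ) (t : ℝ) : ℂ :=
  Complex.exp (-y * t) * (t : ℂ) ^ (α - 1) * ((1 : ℂ) + t) ^ (β - 1)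

/-- The Laplace integral. -/
noncomputable def mkH (y α β : ℂ) : ℂ := ∫ t in Ioi (0 : ℝ), mkK y α β t

theorem mkK_norm (y α β : ℂ) {t : ℝ} (ht : 0 < t) :
    ‖mkK y α β t‖ = Real.exp (-y.re * t) * t ^ (α.re - 1) * (1 + t) ^ (β.re - 1) := by
  unfold mkK
  have h1 : (1 : ℂ) + t = ((1 + t : ℝ) : ℂ) := by push_cast; rfl
  rw [norm_mul, norm_mul, h1, Complex.norm_cpow_eq_rpow_re_of_pos ht,
    Complex.norm_cpow_eq_rpow_re_of_pos (by linarith), Complex.norm_exp]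
  simp

theorem mkK_cont (y α β : ℂ) : ContinuousOn (mkK y α β) (Ioi 0) := by
  intro t ht
  have ht' : (0 : ℝ) < t := ht
  apply ContinuousAt.continuousWithinAt
  unfold mkK
  refine ContinuousAt.mul (ContinuousAt.mul (by fun_prop) ?_) ?_
  · exact Complex.continuousAt_ofReal_cpow_const _ _ (Or.inr ht'.ne')
  · refine ContinuousAt.cpow (by fun_prop) continuousAt_const ?_
    left; simp; linarith

theorem mkB_int {r a b : ℝ} (hr : 0 < r) (ha : 0 < a) :
    IntegrableOn (fun t : ℝ => Real.exp (-r * t) * t ^ (a - 1) * (1 + t) ^ (b - 1)) (Ioi 0) := by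
  obtain ⟨n, hn⟩ := exists_nat_ge (b - 1)
  have h0 := (integrableOn_rpow_mul_exp_neg_mul_rpow (s := a - 1) (p := 1) (b := r / 2)
    (by linarith) one_pos (by linarith)).const_mul
      ((n.factorial : ℝ) * (2 / r) ^ n * Real.exp (r / 2))
  refine Integrable.mono' h0 ?_ ?_
  · apply ContinuousOn.aestronglyMeasurable _ measurableSet_Ioi
    intro t ht
    have ht' : (0 : ℝ) < t := ht
    apply ContinuousAt.continuousWithinAt
    refine ContinuousAt.mul (ContinuousAt.mul (by fun_prop) ?_) ?_
    · exact Real.continuousAt_rpow_const _ _ (Or.inl ht'.ne')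
    · exact ContinuousAt.rpow_const (by fun_prop) (Or.inl (by linarith))
  · filter_upwards [ae_restrict_mem measurableSet_Ioi] with t ht
    have ht' : (0 : ℝ) < t := ht
    have e1 : (1 + t) ^ (b - 1) ≤ (1 + t) ^ n := by
      rw [← Real.rpow_natCast]
      exact Real.rpow_le_rpow_of_exponent_le (by linarith) hn
    have e2 := Real.pow_div_factorial_le_exp (r / 2 * (1 + t)) (by positivity) n
    rw [div_le_iff₀ (by positivity), mul_pow] at e2
    have e3 : (1 + t) ^ n ≤ (2 / r) ^ n * (Real.exp (r / 2 * (1 + t)) * n.factorial) := by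
      calc (1 + t) ^ n = (2 / r) ^ n * ((r / 2) ^ n * (1 + t) ^ n) := by
            rw [← mul_assoc, ← mul_pow]; rw [show 2 / r * (r / 2) = 1 by field_simp]; simp
        _ ≤ _ := by gcongr
    have hp : 0 ≤ Real.exp (-r * t) * t ^ (a - 1) := by positivity
    rw [Real.norm_of_nonneg (by positivity)]
    calc _ ≤ Real.exp (-r * t) * t ^ (a - 1) *
          ((2 / r) ^ n * (Real.exp (r / 2 * (1 + t)) * n.factorial)) :=
            mul_le_mul_of_nonneg_left (e1.trans e3) hp
      _ = _ := by
        have e4 : Real.exp (-r * t) * Real.exp (r / 2 * (1 + t)) =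
            Real.exp (r / 2) * Real.exp (-(r / 2) * t ^ (1 : ℝ)) := by
          rw [← Real.exp_add, ← Real.exp_add, Real.rpow_one]; congr 1; ring
        linear_combination (t ^ (a - 1) * (2 / r) ^ n * n.factorial) * e4

theorem mkK_int {y α β : ℂ} (hy : 0 < y.re) (ha : 0 < α.re) :
    IntegrableOn (mkK y α β) (Ioi 0) := by
  refine Integrable.mono' (mkB_int (b := β.re) hy ha)
    ((mkK_cont y α β).aestronglyMeasurable measurableSet_Ioi) ?_
  filter_upwards [ae_restrict_mem measurableSet_Ioi] with t ht
  exact (mkK_norm y α β ht).le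

theorem mkH_bound (y α β : ℂ) :
    ‖mkH y α β‖ ≤ ∫ t in Ioi (0 : ℝ),
      Real.exp (-y.re * t) * t ^ (α.re - 1) * (1 + t) ^ (β.re - 1) := by
  refine (norm_integral_le_integral_norm _).trans_eq ?_
  exact setIntegral_congr_fun measurableSet_Ioi fun t ht => mkK_norm y α β ht

theorem mkK_deriv (y α β : ℂ) (ha : 0 < α.re) {t : ℝ} (ht : 0 < t) :
    HasDerivAt (mkK y (α + 1) (β + 1))
      (-y * mkK y (α + 1) (β + 1) t + α * mkK y α (β + 1) t + β * mkK y (α + 1) β t) t := by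
  unfold mkK
  have hα : α ≠ 0 := by rintro rfl; simp at ha
  have d1 : HasDerivAt (fun t : ℝ => Complex.exp (-y * t)) (Complex.exp (-y * t) * (-y)) t := by
    have := ((hasDerivAt_id t).ofReal_comp.const_mul (-y)).cexp
    simpa using this
  have d2 := hasDerivAt_ofReal_cpow_const ht.ne' hα
  have d3 : HasDerivAt (fun t : ℝ => ((1 : ℂ) + t) ^ β) (β * ((1 : ℂ) + t) ^ (β - 1)) t := by
    have h := (((hasDerivAt_id (t : ℂ)).const_add (1 : ℂ)).cpow_const (c := β)
      (Or.inl (by change 0 < ((1 : ℂ) + t).re; simp; linarith))).comp_ofReal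
    simpa using h
  have := (d1.mul d2).mul d3
  simp only [add_sub_cancel_right]
  refine this.congr_deriv ?_
  change _ + Complex.exp (-y * t) * (t : ℂ) ^ α * _ = _
  ring

theorem mkH_ibp {y α β : ℂ} (hy : 0 < y.re) (ha : 0 < α.re) :
    -y * mkH y (α + 1) (β + 1) + α * mkH y α (β + 1) + β * mkH y (α + 1) β = 0 := by
  have ha1 : 0 < (α + 1).re := by simp; linarith
  have i1 := (mkK_int (β := β + 1) hy ha1)
  have i2 := (mkK_int (β := β + 1) hy ha).const_mul α
  have i3 := (mkK_int (β := β) hy ha1).const_mul β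
  have i1' := i1.const_mul (-y)
  have i12 := i1'.add i2
  have i123 := i12.add i3
  have hd : ∀ t ∈ Ioi (0 : ℝ), HasDerivAt (mkK y (α + 1) (β + 1)) _ t :=
    fun t ht => mkK_deriv y α β ha ht
  have lim := tendsto_zero_of_hasDerivAt_of_integrableOn_Ioi hd i123 i1
  have hα : α ≠ 0 := by rintro rfl; simp at ha
  have key := integral_Ioi_of_hasDerivAt_of_tendsto (f := mkK y (α + 1) (β + 1)) ?_ hd i123 lim
  · unfold mkH
    rw [← integral_const_mul, ← integral_const_mul, ← integral_const_mul,
      ← integral_add i1' i2]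
    erw [← integral_add i12 i3]
    refine Eq.trans key ?_
    simp [mkK, hα]
  · apply ContinuousAt.continuousWithinAt
    unfold mkK
    refine ContinuousAt.mul (ContinuousAt.mul (by fun_prop) ?_) ?_
    · exact Complex.continuousAt_ofReal_cpow_const _ _ (Or.inl (by simpa using ha))
    · exact ContinuousAt.cpow (by fun_prop) continuousAt_const (by left; simp)

theorem mkH_add {y α β : ℂ} (hy : 0 < y.re) (ha : 0 < α.re) :
    mkH y α (β + 1) = mkH y α β + mkH y (α + 1) β := by
  have ha1 : 0 < (α + 1).re := by simp; linarith
  unfold mkH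
  rw [← integral_add (mkK_int hy ha) (mkK_int hy ha1)]
  refine setIntegral_congr_fun measurableSet_Ioi fun t ht => ?_
  have ht' : (0 : ℝ) < t := ht
  have h1 : (1 : ℂ) + t ≠ 0 := by
    have h1 : (1 : ℂ) + t = ((1 + t : ℝ) : ℂ) := by push_cast; rfl
    rw [h1]; exact_mod_cast (by linarith : (1 + t) ≠ 0)
  have h2 : (t : ℂ) ≠ 0 := by exact_mod_cast ht'.ne'
  simp only [mkK]
  rw [show β + 1 - 1 = (β - 1) + 1 by ring, Complex.cpow_add _ _ h1,
    show α + 1 - 1 = (α - 1) + 1 by ring, Complex.cpow_add _ _ h2, Complex.cpow_one,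
    Complex.cpow_one]
  ring

theorem mkH_rec {y α₀ β₀ s : ℂ} (hy : 0 < y.re) (ha : 0 < (α₀ + s).re) :
    s * mkH y (α₀ + s) (β₀ - s) = y * mkH y (α₀ + 1 + s) (β₀ + 1 - s)
      - α₀ * mkH y (α₀ + s) (β₀ - s) - (α₀ + β₀) * mkH y (α₀ + 1 + s) (β₀ - s) := by
  have h1 := mkH_ibp (β := β₀ - s) hy ha
  have h2 := mkH_add (β := β₀ - s) hy ha
  rw [h2] at h1
  rw [show α₀ + 1 + s = α₀ + s + 1 by ring, show β₀ + 1 - s = β₀ - s + 1 by ring]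
  linear_combination h1

theorem mkH_bdd {y : ℂ} (α₀ β₀ : ℂ) (σ : ℝ) :
    ∃ C : ℝ, 0 ≤ C ∧ ∀ τ : ℝ, ‖mkH y (α₀ + (σ + τ * Complex.I)) (β₀ - (σ + τ * Complex.I))‖ ≤ C := by
  have h : ∀ τ : ℝ, ‖mkH y (α₀ + (σ + τ * Complex.I)) (β₀ - (σ + τ * Complex.I))‖ ≤
      ∫ t in Ioi (0 : ℝ),
        Real.exp (-y.re * t) * t ^ (α₀.re + σ - 1) * (1 + t) ^ (β₀.re - σ - 1) := by
    intro τ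
    refine (mkH_bound _ _ _).trans_eq ?_
    have e1 : (α₀ + (σ + τ * Complex.I)).re = α₀.re + σ := by simp
    have e2 : (β₀ - (σ + τ * Complex.I)).re = β₀.re - σ := by simp
    rw [e1, e2]
  exact ⟨_, (norm_nonneg _).trans (h 0), h⟩

theorem mkH_bdd1 {y : ℂ} (hy : 0 < y.re) (α₀ β₀ : ℂ) (σ : ℝ) (ha : 0 < α₀.re + σ) :
    ∃ C : ℝ, 0 ≤ C ∧ ∀ τ : ℝ, ‖(σ + τ * Complex.I) *
      mkH y (α₀ + (σ + τ * Complex.I)) (β₀ - (σ + τ * Complex.I))‖ ≤ C := by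
  obtain ⟨C1, h1, k1⟩ := mkH_bdd (y := y) (α₀ + 1) (β₀ + 1) σ
  obtain ⟨C2, h2, k2⟩ := mkH_bdd (y := y) α₀ β₀ σ
  obtain ⟨C3, h3, k3⟩ := mkH_bdd (y := y) (α₀ + 1) β₀ σ
  refine ⟨‖y‖ * C1 + ‖α₀‖ * C2 + ‖α₀ + β₀‖ * C3, by positivity, fun τ => ?_⟩
  rw [mkH_rec hy (by simpa using ha)]
  refine (norm_sub_le _ _).trans (add_le_add ((norm_sub_le _ _).trans (add_le_add ?_ ?_)) ?_)
  · rw [norm_mul]; gcongr; exact k1 τ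
  · rw [norm_mul]; gcongr; exact k2 τ
  · rw [norm_mul]; gcongr; exact k3 τ

theorem mkH_bdd2 {y : ℂ} (hy : 0 < y.re) (α₀ β₀ : ℂ) (σ : ℝ) (ha : 0 < α₀.re + σ) :
    ∃ C : ℝ, 0 ≤ C ∧ ∀ τ : ℝ, ‖(σ + τ * Complex.I) * ((σ + τ * Complex.I) *
      mkH y (α₀ + (σ + τ * Complex.I)) (β₀ - (σ + τ * Complex.I)))‖ ≤ C := by
  have ha1 : 0 < (α₀ + 1).re + σ := by simp; linarith
  obtain ⟨C1, h1, k1⟩ := mkH_bdd1 hy (α₀ + 1) (β₀ + 1) σ ha1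
  obtain ⟨C2, h2, k2⟩ := mkH_bdd1 hy α₀ β₀ σ ha
  obtain ⟨C3, h3, k3⟩ := mkH_bdd1 hy (α₀ + 1) β₀ σ ha1
  refine ⟨‖y‖ * C1 + ‖α₀‖ * C2 + ‖α₀ + β₀‖ * C3, by positivity, fun τ => ?_⟩
  rw [mkH_rec hy (by simpa using ha), mul_sub, mul_sub, mul_left_comm, mul_left_comm _ α₀,
    mul_left_comm _ (α₀ + β₀)]
  refine (norm_sub_le _ _).trans (add_le_add ((norm_sub_le _ _).trans (add_le_add ?_ ?_)) ?_)
  · rw [norm_mul]; gcongr; exact k1 τ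
  · rw [norm_mul]; gcongr; exact k2 τ
  · rw [norm_mul]; gcongr; exact k3 τ

theorem mkH_cont {y : ℂ} (hy : 0 < y.re) (α₀ β₀ : ℂ) (σ : ℝ) (ha : 0 < α₀.re + σ) :
    Continuous fun τ : ℝ => mkH y (α₀ + (σ + τ * Complex.I)) (β₀ - (σ + τ * Complex.I)) := by
  unfold mkH
  refine continuous_of_dominated (bound := fun t : ℝ => Real.exp (-y.re * t) *
    t ^ (α₀.re + σ - 1) * (1 + t) ^ (β₀.re - σ - 1)) ?_ ?_ (mkB_int hy ha) ?_
  · exact fun τ => (mkK_cont _ _ _).aestronglyMeasurable measurableSet_Ioi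
  · intro τ
    filter_upwards [ae_restrict_mem measurableSet_Ioi] with t ht
    rw [mkK_norm _ _ _ ht]
    simp
  · filter_upwards [ae_restrict_mem measurableSet_Ioi] with t ht
    have ht' : (0 : ℝ) < t := ht
    have h1 : (1 : ℂ) + t ≠ 0 := by
      have h1 : (1 : ℂ) + t = ((1 + t : ℝ) : ℂ) := by push_cast; rfl
      rw [h1]; exact_mod_cast (by linarith : (1 + t) ≠ 0)
    have h2 : (t : ℂ) ≠ 0 := by exact_mod_cast ht'.ne'
    unfold mkK
    refine Continuous.mul (Continuous.mul (by fun_prop) ?_) ?_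
    · exact Continuous.const_cpow (by fun_prop) (Or.inl h2)
    · exact Continuous.const_cpow (by fun_prop) (Or.inl h1)

theorem mkH_vint {y : ℂ} (hy : 0 < y.re) (α₀ β₀ : ℂ) (σ : ℝ) (ha : 0 < α₀.re + σ) :
    Integrable fun τ : ℝ => mkH y (α₀ + (σ + τ * Complex.I)) (β₀ - (σ + τ * Complex.I)) := by
  obtain ⟨C, hC, k⟩ := mkH_bdd (y := y) α₀ β₀ σ
  obtain ⟨D, hD, l⟩ := mkH_bdd2 hy α₀ β₀ σ ha
  refine Integrable.mono' (integrable_inv_one_add_sq.const_mul (C + D))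
    (mkH_cont hy α₀ β₀ σ ha).aestronglyMeasurable (Eventually.of_forall fun τ => ?_)
  have hk := k τ
  have hl := l τ
  rw [norm_mul, norm_mul, ← mul_assoc] at hl
  have hs : τ ^ 2 ≤ ‖(σ + τ * Complex.I : ℂ)‖ * ‖(σ + τ * Complex.I : ℂ)‖ := by
    rw [Complex.norm_mul_self_eq_normSq, Complex.normSq_add_mul_I]; nlinarith
  rw [← div_eq_mul_inv, le_div_iff₀ (by positivity)]
  nlinarith [mul_le_mul_of_nonneg_right hs (norm_nonneg
    (mkH y (α₀ + (σ + τ * Complex.I)) (β₀ - (σ + τ * Complex.I))))]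

theorem mk_cpow {t : ℝ} (ht : 0 < t) (z : ℂ) :
    ((t / (1 + t) : ℝ) : ℂ) ^ z = (t : ℂ) ^ z * ((1 : ℂ) + t) ^ (-z) := by
  have h1 : (1 : ℂ) + t = ((1 + t : ℝ) : ℂ) := by push_cast; rfl
  have ht1 : 0 < 1 + t := by linarith
  rw [h1, div_eq_mul_inv, Complex.ofReal_mul, Complex.mul_cpow_ofReal_nonneg ht.le
    (inv_nonneg.2 ht1.le), Complex.ofReal_inv, Complex.inv_cpow, Complex.cpow_neg]
  rw [Complex.arg_ofReal_of_nonneg ht1.le]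
  exact Real.pi_pos.ne

theorem mk_image : (fun t : ℝ => t / (1 + t)) '' Ioi 0 = Ioo 0 1 := by
  ext w
  constructor
  · rintro ⟨t, ht, rfl⟩
    have ht' : (0 : ℝ) < t := ht
    refine ⟨by positivity, ?_⟩
    rw [div_lt_one (by linarith)]; linarith
  · rintro ⟨h0, h1⟩
    have h2 : 0 < 1 - w := by linarith
    refine ⟨w / (1 - w), mem_Ioi.2 (by positivity), ?_⟩
    field_simp
    ring

theorem mk_inv {t : ℝ} (ht : 0 < t) : (t / (1 + t)) / (1 - t / (1 + t)) = t := by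
  have : 1 + t ≠ 0 := by linarith
  have h : 1 - t / (1 + t) = 1 / (1 + t) := by field_simp; ring
  rw [h]; field_simp

theorem mk_injOn : InjOn (fun t : ℝ => t / (1 + t)) (Ioi 0) := by
  intro a ha b hb h
  have h' : a / (1 + a) = b / (1 + b) := h
  rw [← mk_inv ha, h', mk_inv hb]

theorem mk_hasDeriv {t : ℝ} (ht : 0 < t) :
    HasDerivWithinAt (fun t : ℝ => t / (1 + t)) (1 / (1 + t) ^ 2) (Ioi 0) t := by
  have h := (hasDerivAt_id t).div ((hasDerivAt_id t).const_add (1 : ℝ)) (by simp; linarith)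
  refine (h.congr_deriv ?_).hasDerivWithinAt
  simp

/-- The function whose Mellin transform is the Laplace integral along the line. -/
noncomputable def mkPhi (c y : ℂ) : ℝ → ℂ :=
  (Ioo (0 : ℝ) 1).indicator fun w => mkK y (c / 2 + 1) (c / 2 + 1) (w / (1 - w))

theorem mk_pt (c y s : ℂ) {t : ℝ} (ht : 0 < t) :
    |1 / (1 + t) ^ 2| • (((t / (1 + t) : ℝ) : ℂ) ^ (s - 1) •
      mkK y (c / 2 + 1) (c / 2 + 1) ((t / (1 + t)) / (1 - t / (1 + t)))) =
    mkK y (c / 2 + s) (c / 2 - s) t := by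
  have h1 : (1 : ℂ) + t ≠ 0 := by
    have h1 : (1 : ℂ) + t = ((1 + t : ℝ) : ℂ) := by push_cast; rfl
    rw [h1]; exact_mod_cast (by linarith : (1 + t) ≠ 0)
  have h2 : (t : ℂ) ≠ 0 := by exact_mod_cast ht.ne'
  rw [mk_inv ht, mk_cpow ht, abs_of_pos (by positivity)]
  simp only [mkK, Complex.real_smul, smul_eq_mul]
  rw [show c / 2 + s - 1 = (s - 1) + (c / 2 + 1 - 1) by ring, Complex.cpow_add _ _ h2,
    show c / 2 - s - 1 = -(s - 1) + (c / 2 + 1 - 1) + (-2 : ℂ) by ring, Complex.cpow_add _ _ h1,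
    Complex.cpow_add _ _ h1, Complex.cpow_neg _ 2]
  have h3 : ((1 : ℂ) + t) ^ (2 : ℂ) = (1 + t) ^ 2 := by
    exact_mod_cast Complex.cpow_natCast ((1 : ℂ) + t) 2
  rw [h3]
  push_cast
  ring

theorem mk_ind (c y s : ℂ) : (fun w : ℝ => (w : ℂ) ^ (s - 1) • mkPhi c y w) =
    (Ioo (0 : ℝ) 1).indicator
      fun w => (w : ℂ) ^ (s - 1) • mkK y (c / 2 + 1) (c / 2 + 1) (w / (1 - w)) := by
  ext w
  by_cases h : w ∈ Ioo (0 : ℝ) 1 <;> simp [mkPhi, h]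

theorem mk_mellin (c y s : ℂ) : mellin (mkPhi c y) s = mkH y (c / 2 + s) (c / 2 - s) := by
  unfold mellin
  rw [mk_ind, setIntegral_indicator measurableSet_Ioo,
    inter_eq_self_of_subset_right Ioo_subset_Ioi_self, ← mk_image,
    integral_image_eq_integral_abs_deriv_smul measurableSet_Ioi (fun t ht => mk_hasDeriv ht)
      mk_injOn]
  exact setIntegral_congr_fun measurableSet_Ioi fun t ht => mk_pt c y s ht

theorem mk_mconv {c y s : ℂ} (hy : 0 < y.re) (hs : 0 < (c / 2 + s).re) :
    MellinConvergent (mkPhi c y) s := by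
  unfold MellinConvergent
  rw [mk_ind, integrableOn_indicator_iff measurableSet_Ioo,
    inter_eq_self_of_subset_left Ioo_subset_Ioi_self, ← mk_image,
    integrableOn_image_iff_integrableOn_abs_deriv_smul measurableSet_Ioi
      (fun t ht => mk_hasDeriv ht) mk_injOn]
  refine (integrableOn_congr_fun (fun t ht => mk_pt c y s ht) measurableSet_Ioi).2 ?_
  exact mkK_int hy hs

theorem mk_inversion {c y : ℂ} {σ : ℝ} (hy : 0 < y.re) (hs : 0 < (c / 2).re + σ) {t : ℝ}
    (ht : 0 < t) :
    ∫ τ : ℝ, ((t / (1 + t) : ℝ) : ℂ) ^ (-(σ + τ * Complex.I)) *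
      mkH y (c / 2 + (σ + τ * Complex.I)) (c / 2 - (σ + τ * Complex.I)) =
    (2 * Real.pi) * mkK y (c / 2 + 1) (c / 2 + 1) t := by
  have hw : t / (1 + t) ∈ Ioo (0 : ℝ) 1 := by rw [← mk_image]; exact mem_image_of_mem _ ht
  have key := mellinInv_mellin_eq σ (mkPhi c y) hw.1 (mk_mconv hy (by simpa using hs)) ?_ ?_
  · have e : mkPhi c y (t / (1 + t)) = mkK y (c / 2 + 1) (c / 2 + 1) t := by
      rw [mkPhi, indicator_of_mem hw, mk_inv ht]
    rw [e, mellinInv] at key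
    simp only [mk_mellin, smul_eq_mul] at key
    rw [← key, Complex.real_smul, ← mul_assoc]
    have : (Real.pi : ℂ) ≠ 0 := by exact_mod_cast Real.pi_pos.ne'
    have h2 : (2 * Real.pi : ℂ) * ((1 / (2 * Real.pi) : ℝ) : ℂ) = 1 := by
      push_cast; field_simp
    rw [h2, one_mul]
  · unfold Complex.VerticalIntegrable
    simp only [mk_mellin]
    exact mkH_vint hy _ _ σ hs
  · have hc : ContinuousAt (fun w : ℝ => mkK y (c / 2 + 1) (c / 2 + 1) (w / (1 - w)))
        (t / (1 + t)) := by
      have h1 : ContinuousAt (fun w : ℝ => w / (1 - w)) (t / (1 + t)) := by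
        refine ContinuousAt.div (by fun_prop) (by fun_prop) ?_
        have := hw.2
        linarith
      refine ContinuousAt.comp (g := mkK y (c / 2 + 1) (c / 2 + 1)) ?_ h1
      rw [mk_inv ht]
      exact (mkK_cont _ _ _).continuousAt (Ioi_mem_nhds ht)
    refine hc.congr ?_
    filter_upwards [Ioo_mem_nhds hw.1 hw.2] with w hw'
    rw [mkPhi, indicator_of_mem hw']

theorem mk_pt2 (c x s : ℂ) {t : ℝ} (ht : 0 < t) :
    mkK x (c / 2 - s) (c / 2 + s) t =
      mkK x (c / 2) (c / 2) t * ((t / (1 + t) : ℝ) : ℂ) ^ (-s) := by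
  have h1 : (1 : ℂ) + t ≠ 0 := by
    have h1 : (1 : ℂ) + t = ((1 + t : ℝ) : ℂ) := by push_cast; rfl
    rw [h1]; exact_mod_cast (by linarith : (1 + t) ≠ 0)
  have h2 : (t : ℂ) ≠ 0 := by exact_mod_cast ht.ne'
  rw [mk_cpow ht]
  simp only [mkK]
  rw [show c / 2 - s - 1 = (c / 2 - 1) + -s by ring, Complex.cpow_add _ _ h2,
    show c / 2 + s - 1 = (c / 2 - 1) + - -s by ring, Complex.cpow_add _ _ h1]
  ring

theorem mk_pt3 (c x y : ℂ) {t : ℝ} (ht : 0 < t) :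
    mkK x (c / 2) (c / 2) t * mkK y (c / 2 + 1) (c / 2 + 1) t = mkK (x + y) c c t := by
  have h1 : (1 : ℂ) + t ≠ 0 := by
    have h1 : (1 : ℂ) + t = ((1 + t : ℝ) : ℂ) := by push_cast; rfl
    rw [h1]; exact_mod_cast (by linarith : (1 + t) ≠ 0)
  have h2 : (t : ℂ) ≠ 0 := by exact_mod_cast ht.ne'
  simp only [mkK]
  rw [show c - 1 = (c / 2 - 1) + (c / 2 + 1 - 1) by ring, Complex.cpow_add _ _ h2,
    Complex.cpow_add _ _ h1, show -(x + y) * (t : ℂ) = -x * t + -y * t by ring, Complex.exp_add]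
  ring

theorem mk_main {c x y : ℂ} {σ : ℝ} (hx : 0 < x.re) (hy : 0 < y.re)
    (h1 : 0 < (c / 2).re + σ) (h2 : 0 < (c / 2).re - σ) :
    ∫ τ : ℝ, mkH x (c / 2 - (σ + τ * Complex.I)) (c / 2 + (σ + τ * Complex.I)) *
      mkH y (c / 2 + (σ + τ * Complex.I)) (c / 2 - (σ + τ * Complex.I)) =
    (2 * Real.pi) * mkH (x + y) c c := by
  have hG := mkH_vint hy (c / 2) (c / 2) σ h1
  have hA : IntegrableOn (mkK x (c / 2 - σ) (c / 2 + σ)) (Ioi 0) := mkK_int hx (by simpa using h2)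
  have hprod := hG.mul_prod hA
  have hint : Integrable (Function.uncurry fun (τ : ℝ) (t : ℝ) =>
      mkK x (c / 2 - (σ + τ * Complex.I)) (c / 2 + (σ + τ * Complex.I)) t *
      mkH y (c / 2 + (σ + τ * Complex.I)) (c / 2 - (σ + τ * Complex.I)))
      (volume.prod (volume.restrict (Ioi 0))) := by
    have hae : ∀ᵐ p : ℝ × ℝ ∂(volume.prod (volume.restrict (Ioi (0 : ℝ)))), 0 < p.2 := by
      have := (Measure.quasiMeasurePreserving_snd (μ := (volume : Measure ℝ))
        (ν := volume.restrict (Ioi (0 : ℝ)))).ae (ae_restrict_mem measurableSet_Ioi)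
      exact this
    refine hprod.mono ?_ ?_
    · have hm : AEStronglyMeasurable (fun p : ℝ × ℝ =>
          mkK x (c / 2 - (σ + p.1 * Complex.I)) (c / 2 + (σ + p.1 * Complex.I)) p.2)
          (volume.prod (volume.restrict (Ioi 0))) := by
        apply Measurable.aestronglyMeasurable
        unfold mkK
        fun_prop
      exact hm.mul ((mkH_cont hy (c / 2) (c / 2) σ h1).comp
        continuous_fst).measurable.aestronglyMeasurable
    · filter_upwards [hae] with p hp
      simp only [Function.uncurry, norm_mul]
      rw [mkK_norm _ _ _ hp, mkK_norm _ _ _ hp, mul_comm]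
      simp
  have e1 : ∀ τ : ℝ, mkH x (c / 2 - (σ + τ * Complex.I)) (c / 2 + (σ + τ * Complex.I)) *
      mkH y (c / 2 + (σ + τ * Complex.I)) (c / 2 - (σ + τ * Complex.I)) =
      ∫ t in Ioi (0 : ℝ), mkK x (c / 2 - (σ + τ * Complex.I)) (c / 2 + (σ + τ * Complex.I)) t *
      mkH y (c / 2 + (σ + τ * Complex.I)) (c / 2 - (σ + τ * Complex.I)) := by
    intro τ
    rw [integral_mul_const, mkH]
  simp_rw [e1]
  rw [integral_integral_swap hint, mkH, ← integral_const_mul]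
  refine setIntegral_congr_fun measurableSet_Ioi fun t ht => ?_
  have ht' : (0 : ℝ) < t := ht
  simp_rw [mk_pt2 c x _ ht', mul_assoc]
  rw [integral_const_mul, mk_inversion hy h1 ht', ← mk_pt3 c x y ht']
  ring

theorem mk_hypU {a b z : ℂ} (ha : 0 < a.re) :
    Complex.Gamma a * hypU a b z = mkH z a (b - a) := by
  unfold hypU mkH mkK
  rw [← mul_assoc, mul_inv_cancel₀ (Complex.Gamma_ne_zero_of_re_pos ha), one_mul]

/-- Magnus' integral addition theorem on the vertical contour `Re s = Re σ`:
`Γ(c) U(c, 2c, x+y) = (1/(2πi)) ∫_{σ-i∞}^{σ+i∞} Γ(c/2-s) Γ(c/2+s) U(c/2-s,c,x) U(c/2+s,c,y) ds`,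
where the contour integral is `i ∫_ℝ f(σ + iτ) dτ`. -/
theorem magnus_addition_contour (c x y σ : ℂ) (hc : 0 < c.re) (hx : 0 < x.re)
    (hy : 0 < y.re) (hσ : |σ.re| < c.re / 2) :
    Complex.Gamma c * hypU c (2 * c) (x + y) =
      (1 / (2 * (Real.pi : ℂ) * Complex.I)) *
        (Complex.I * ∫ τ : ℝ,
          Complex.Gamma (c / 2 - (σ + Complex.I * τ)) *
          Complex.Gamma (c / 2 + (σ + Complex.I * τ)) *
          hypU (c / 2 - (σ + Complex.I * τ)) c x *
          hypU (c / 2 + (σ + Complex.I * τ)) c y) := by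
  have hre := abs_lt.1 hσ
  have hc2 : (c / 2).re = c.re / 2 := by simp
  have key := mk_main (c := c) (σ := σ.re) hx hy (by rw [hc2]; linarith) (by rw [hc2]; linarith)
  rw [mk_hypU hc, show 2 * c - c = c by ring]
  have e : ∀ τ : ℝ, Complex.Gamma (c / 2 - (σ + Complex.I * τ)) *
          Complex.Gamma (c / 2 + (σ + Complex.I * τ)) *
          hypU (c / 2 - (σ + Complex.I * τ)) c x *
          hypU (c / 2 + (σ + Complex.I * τ)) c y =
      (fun τ : ℝ => mkH x (c / 2 - (σ.re + τ * Complex.I)) (c / 2 + (σ.re + τ * Complex.I)) *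
      mkH y (c / 2 + (σ.re + τ * Complex.I)) (c / 2 - (σ.re + τ * Complex.I))) (τ + σ.im) := by
    intro τ
    have es : σ + Complex.I * τ = σ.re + ((τ + σ.im : ℝ) : ℂ) * Complex.I := by
      conv_lhs => rw [← Complex.re_add_im σ]
      push_cast; ring
    rw [es]
    simp only []
    set s : ℂ := σ.re + ((τ + σ.im : ℝ) : ℂ) * Complex.I with hs
    have hsr : s.re = σ.re := by simp [hs]
    have g1 := mk_hypU (a := c / 2 - s) (b := c) (z := x)
      (by rw [Complex.sub_re, hc2, hsr]; linarith)
    have g2 := mk_hypU (a := c / 2 + s) (b := c) (z := y)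
      (by rw [Complex.add_re, hc2, hsr]; linarith)
    rw [show c - (c / 2 - s) = c / 2 + s by ring] at g1
    rw [show c - (c / 2 + s) = c / 2 - s by ring] at g2
    rw [← g1, ← g2]
    ring
  rw [integral_congr_ae (Eventually.of_forall e),
    integral_add_right_eq_self (μ := (volume : Measure ℝ))
      (fun τ : ℝ => mkH x (c / 2 - (σ.re + τ * Complex.I)) (c / 2 + (σ.re + τ * Complex.I)) *
      mkH y (c / 2 + (σ.re + τ * Complex.I)) (c / 2 - (σ.re + τ * Complex.I))) σ.im, key]
  have : (Real.pi : ℂ) ≠ 0 := by exact_mod_cast Real.pi_pos.ne'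
  field_simp
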